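/- arXiv:1202.0932 — 10 statements merged into one kernel-verified Lean document; each statement's English description precedes it below -/
import Mathlib

section
/- For every n ≥ 1 and all permutations π, σ ∈ S_n, the translocation distance satisfies d∘(π,σ) = n − l(π,σ), where l(π,σ) is the length of the longest common subsequence of π and σ. -/
/-- `IsMove l l'` holds if `l'` is obtained from `l` by a single translocation:
removing the element at position `i` and reinserting it at position `j`. -/
def IsMove {α : Type*} (l l' : List α) : Prop :=
  ∃ i j : Fin l.length, l' = (l.eraseIdx i).insertIdx j (l.get i)

/-- `ReachIn step m l l'` holds if `l'` can be obtained from `l` by `m` applications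
of the relation `step`. -/
def ReachIn {α : Type*} (step : List α → List α → Prop) : ℕ → List α → List α → Prop
  | 0, l, l' => l = l'
  | m+1, l, l' => ∃ l'', step l l'' ∧ ReachIn step m l'' l'

/-- The one-line notation of a permutation of `Fin n`. -/
def oneLine {n : ℕ} (σ : Equiv.Perm (Fin n)) : List (Fin n) := List.ofFn σ

/-- The translocation distance: the minimum number of translocations transforming
the one-line notation of `σ` into that of `π`. -/
noncomputable def translocDist {n : ℕ} (σ π : Equiv.Perm (Fin n)) : ℕ :=
  sInf {m | ReachIn IsMove m (oneLine σ) (oneLine π)}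

/-- The length of the longest common subsequence of two lists. -/
noncomputable def lcsLen {α : Type*} (l₁ l₂ : List α) : ℕ :=
  sSup {m | ∃ w : List α, w.length = m ∧ w.Sublist l₁ ∧ w.Sublist l₂}

theorem insertIdx_append_length {α : Type*} (C D : List α) (a : α) :
    (C ++ D).insertIdx C.length a = C ++ a :: D := by
  induction C with
  | nil => simp
  | cons c C ih => simp [ih]

theorem isMove_iff {α : Type*} (l l' : List α) : IsMove l l' ↔
    ∃ (A B C D : List α) (a : α), l = A ++ a :: B ∧ l' = C ++ a :: D ∧ A ++ B = C ++ D := by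
  constructor
  · rintro ⟨i, j, rfl⟩
    have hlen : (j : ℕ) ≤ (l.eraseIdx i).length := by
      rw [List.length_eraseIdx_of_lt i.2]; omega
    refine ⟨l.take i, l.drop (i+1), (l.eraseIdx i).take j, (l.eraseIdx i).drop j, l.get i, ?_, ?_, ?_⟩
    · simp
    · have h := insertIdx_append_length ((l.eraseIdx i).take j) ((l.eraseIdx i).drop j) (l.get i)
      rwa [List.take_append_drop, List.length_take, min_eq_left hlen] at h
    · rw [List.take_append_drop, List.eraseIdx_eq_take_drop_succ]
  · rintro ⟨A, B, C, D, a, rfl, rfl, h⟩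
    have hl := congrArg List.length h
    simp only [List.length_append] at hl
    refine ⟨⟨A.length, by simp⟩, ⟨C.length, by simp; omega⟩, ?_⟩
    have h1 : (A ++ a :: B).eraseIdx A.length = A ++ B := by
      simp [List.eraseIdx_append_of_length_le]
    simp only [h1, h, List.get_eq_getElem]
    rw [insertIdx_append_length]
    simp

theorem sublist_drop_one {α : Type*} {w C D : List α} {a : α} (h : w.Sublist (C ++ a :: D)) :
    ∃ w' : List α, w'.Sublist w ∧ w'.Sublist (C ++ D) ∧ w.length ≤ w'.length + 1 := by
  obtain ⟨u, v, rfl, hu, hv⟩ := List.sublist_append_iff.1 h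
  rcases List.sublist_cons_iff.1 hv with hv | ⟨r, rfl, hr⟩
  · exact ⟨u ++ v, List.Sublist.refl _, hu.append hv, by simp⟩
  · exact ⟨u ++ r, (List.Sublist.refl u).append (List.sublist_cons_self a r), hu.append hr,
      by simp; omega⟩

theorem reach_common {α : Type*} (m : ℕ) : ∀ l l' : List α, ReachIn IsMove m l l' →
    ∃ w : List α, w.Sublist l ∧ w.Sublist l' ∧ l.length ≤ w.length + m := by
  induction m with
  | zero =>
    intro l l' h
    obtain rfl : l = l' := h
    exact ⟨l, List.Sublist.refl _, List.Sublist.refl _, by simp⟩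
  | succ m ih =>
    rintro l l' ⟨l'', hm, hr⟩
    obtain ⟨w, h1, h2, h3⟩ := ih _ _ hr
    obtain ⟨A, B, C, D, a, rfl, rfl, h⟩ := (isMove_iff _ _).1 hm
    obtain ⟨w', g1, g2, g3⟩ := sublist_drop_one h1
    have hl := congrArg List.length h
    refine ⟨w', ?_, g1.trans h2, ?_⟩
    · rw [← h] at g2
      exact g2.trans ((List.Sublist.refl A).append (List.sublist_cons_self a B))
    · simp only [List.length_append, List.length_cons] at *
      omega

theorem sublist_extend {α : Type*} {w l : List α} (h : w.Sublist l) :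
    w.length < l.length → ∃ (u v : List α) (a : α), w = u ++ v ∧ (u ++ a :: v).Sublist l := by
  induction h with
  | slnil => simp
  | @cons l₁ l₂ a h ih =>
    intro _
    exact ⟨[], l₁, a, rfl, h.cons_cons a⟩
  | @cons_cons l₁ l₂ a h ih =>
    intro hl
    obtain ⟨u, v, b, rfl, h2⟩ := ih (by simpa using hl)
    exact ⟨a :: u, v, b, rfl, h2.cons_cons a⟩

theorem reach_of_common {α : Type*} (l' : List α) (hnd : l'.Nodup) (m : ℕ) :
    ∀ l w : List α, l.Perm l' → w.Sublist l → w.Sublist l' → l'.length = w.length + m →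
    ReachIn IsMove m l l' := by
  induction m with
  | zero =>
    intro l w hp h1 h2 h3
    have e2 := h2.eq_of_length (by omega)
    have e1 := h1.eq_of_length (by rw [hp.length_eq]; omega)
    exact e1.symm.trans e2
  | succ m ih =>
    intro l w hp h1 h2 h3
    obtain ⟨u, v, a, rfl, hs⟩ := sublist_extend h2 (by omega)
    have hal : a ∈ l := hp.mem_iff.2 (hs.subset (by simp))
    have haw : a ∉ u ++ v := (List.nodup_middle.1 (hnd.sublist hs)).notMem
    obtain ⟨A, B, rfl⟩ := List.append_of_mem hal
    have hAB : (u ++ v).Sublist (A ++ B) := by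
      obtain ⟨p, q, e, hp', hq⟩ := List.sublist_append_iff.1 h1
      rw [e]
      refine hp'.append ?_
      rcases List.sublist_cons_iff.1 hq with hq | ⟨r, rfl, _⟩
      · exact hq
      · exact absurd (by rw [e]; simp) haw
    obtain ⟨C, D, hCD, hu, hv⟩ := List.append_sublist_iff.1 hAB
    refine ⟨C ++ a :: D, (isMove_iff _ _).2 ⟨A, B, C, D, a, rfl, rfl, hCD⟩, ?_⟩
    refine ih _ (u ++ a :: v) ?_ (hu.append (hv.cons_cons a)) hs ?_
    · refine List.Perm.trans ?_ hp
      refine List.perm_middle.trans (List.Perm.trans ?_ List.perm_middle.symm)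
      rw [hCD]
    · simp only [List.length_append, List.length_cons] at *
      omega

/-- For every `n ≥ 1` and all permutations `π, σ ∈ S_n`, the translocation distance
equals `n` minus the length of the longest common subsequence of `π` and `σ`. -/
theorem translocDist_eq_sub_lcsLen (n : ℕ) (hn : 1 ≤ n) (π σ : Equiv.Perm (Fin n)) :
    translocDist π σ = n - lcsLen (oneLine π) (oneLine σ) := by
  have len : ∀ τ : Equiv.Perm (Fin n), (oneLine τ).length = n := fun τ => by simp [oneLine]
  have nd : ∀ τ : Equiv.Perm (Fin n), (oneLine τ).Nodup := fun τ =>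
    List.nodup_ofFn.2 τ.injective
  have hmem : ∀ (τ : Equiv.Perm (Fin n)) (x : Fin n), x ∈ oneLine τ := fun τ x =>
    (List.mem_ofFn' τ x).2 (τ.surjective x)
  have hp : (oneLine π).Perm (oneLine σ) :=
    (List.perm_ext_iff_of_nodup (nd π) (nd σ)).2 fun x => by simp [hmem]
  have hbdd : BddAbove {m | ∃ w : List (Fin n), w.length = m ∧ w.Sublist (oneLine π) ∧
      w.Sublist (oneLine σ)} := by
    refine ⟨n, ?_⟩
    rintro m ⟨w, rfl, h, _⟩
    exact h.length_le.trans_eq (len π)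
  have hne : {m | ∃ w : List (Fin n), w.length = m ∧ w.Sublist (oneLine π) ∧
      w.Sublist (oneLine σ)}.Nonempty := ⟨0, [], rfl, by simp, by simp⟩
  obtain ⟨w, hw, h1, h2⟩ := Nat.sSup_mem hne hbdd
  change w.length = lcsLen (oneLine π) (oneLine σ) at hw
  have hwn : w.length ≤ n := h1.length_le.trans_eq (len π)
  have hr : ReachIn IsMove (n - w.length) (oneLine π) (oneLine σ) :=
    reach_of_common _ (nd σ) _ _ w hp h1 h2 (by rw [len]; omega)
  rw [← hw]
  apply le_antisymm
  · exact Nat.sInf_le hr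
  · refine le_csInf ⟨_, hr⟩ ?_
    intro m hm
    obtain ⟨w', g1, g2, g3⟩ := reach_common m _ _ hm
    have : w'.length ≤ lcsLen (oneLine π) (oneLine σ) := le_csSup hbdd ⟨w', rfl, g1, g2⟩
    rw [len] at g3
    omega
end

section
/- For every n ≥ 1 and all permutations σ, π ∈ S_n, the minimum total number of single-element deletions and insertions needed to transform the sequence (σ(1),…,σ(n)) into the sequence (π(1),…,π(n)) equals 2·d∘(σ,π). -/
/-- `IsDelIns l l'` holds if `l'` is obtained from `l` by deleting one element or
inserting one element at an arbitrary position. -/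
def IsDelIns {α : Type*} (l l' : List α) : Prop :=
  (∃ i : Fin l.length, l' = l.eraseIdx i) ∨
  (∃ (i : ℕ) (a : α), i ≤ l.length ∧ l' = l.insertIdx i a)

/-- The Levenshtein deletion/insertion distance between two lists. -/
noncomputable def delInsDist {α : Type*} (u v : List α) : ℕ :=
  sInf {m | ReachIn IsDelIns m u v}

theorem insertIdx_eq_take_drop_aux {α : Type*} (a : α) : ∀ (l : List α) (i : ℕ), i ≤ l.length →
    l.insertIdx i a = l.take i ++ a :: l.drop i
  | l, 0, _ => by simp
  | [], i+1, h => by simp at h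
  | b :: l, i+1, h => by
    simp only [List.length_cons] at h
    simp [insertIdx_eq_take_drop_aux a l i (by omega)]

theorem exists_common_sublist {α : Type*} : ∀ (m : ℕ) (u v : List α), ReachIn IsDelIns m u v →
    ∃ s : List α, s.Sublist u ∧ s.Sublist v ∧ u.length + v.length ≤ m + 2 * s.length
  | 0, u, v, h => by
    have h : u = v := h
    subst h
    exact ⟨u, List.Sublist.refl _, List.Sublist.refl _, by omega⟩
  | m+1, u, v, h => by
    obtain ⟨w, hs, hr⟩ := h
    obtain ⟨s, hsw, hsv, hlen⟩ := exists_common_sublist m w v hr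
    rcases hs with ⟨i, rfl⟩ | ⟨i, a, hi, rfl⟩
    · refine ⟨s, hsw.trans (List.eraseIdx_sublist _ _), hsv, ?_⟩
      have := List.length_eraseIdx_add_one i.2
      omega
    · rw [List.length_insertIdx_of_le_length hi] at hlen
      rw [insertIdx_eq_take_drop_aux _ _ _ hi] at hsw
      obtain ⟨s1, s2, rfl, h1, h2⟩ := List.sublist_append_iff.1 hsw
      rw [List.sublist_cons_iff] at h2
      rcases h2 with h2 | ⟨r, rfl, h2⟩
      · refine ⟨s1 ++ s2, ?_, hsv, by omega⟩
        have := h1.append h2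
        rwa [List.take_append_drop] at this
      · refine ⟨s1 ++ r, ?_, ?_, ?_⟩
        · have := h1.append h2
          rwa [List.take_append_drop] at this
        · exact List.Sublist.trans ((List.Sublist.refl s1).append (List.sublist_cons_self a r)) hsv
        · simp only [List.length_append, List.length_cons] at hlen ⊢
          omega

theorem isMove_of_append {α : Type*} (u1 u2 w1 w2 : List α) (a : α) (h : u1 ++ u2 = w1 ++ w2) :
    IsMove (u1 ++ a :: u2) (w1 ++ a :: w2) := by
  have hl := congrArg List.length h
  simp only [List.length_append] at hl
  refine ⟨⟨u1.length, by simp⟩, ⟨w1.length, by simp; omega⟩, ?_⟩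
  have he : (u1 ++ a :: u2).eraseIdx u1.length = w1 ++ w2 := by
    rw [List.eraseIdx_append_of_length_le le_rfl]
    simp [h]
  simp only [he]
  rw [insertIdx_eq_take_drop_aux _ _ _ (by simp)]
  simp

theorem sublist_append_of_notMem {α : Type*} {s p q : List α} {a : α}
    (h : s.Sublist (p ++ a :: q)) (ha : a ∉ s) : s.Sublist (p ++ q) := by
  obtain ⟨s1, s2, rfl, h1, h2⟩ := List.sublist_append_iff.1 h
  rw [List.sublist_cons_iff] at h2
  rcases h2 with h2 | ⟨r, rfl, h2⟩
  · exact h1.append h2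
  · simp at ha

theorem reachIn_move {α : Type*} (v : List α) : ∀ (k : ℕ) (u s : List α), u.Nodup → u.Perm v →
    s.Sublist u → s.Sublist v → u.length = s.length + k → ReachIn IsMove k u v
  | 0, u, s, hn, hp, hu, hv, hl => by
    have h1 := hu.eq_of_length (by omega)
    have h2 := hv.eq_of_length (by rw [← hp.length_eq]; omega)
    exact h1.symm.trans h2
  | k+1, u, s, hn, hp, hu, hv, hl => by
    have hex : ∃ a ∈ u, a ∉ s := by
      by_contra! hc
      have := (hn.subperm hc).length_le
      omega
    obtain ⟨a, hau, has⟩ := hex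
    obtain ⟨u1, u2, rfl⟩ := List.append_of_mem hau
    obtain ⟨v1, v2, rfl⟩ := List.append_of_mem (hp.subset hau)
    have hv' := sublist_append_of_notMem hv has
    have hu' := sublist_append_of_notMem hu has
    obtain ⟨s1, s2, rfl, h1, h2⟩ := List.sublist_append_iff.1 hv'
    obtain ⟨w1, w2, hw, g1, g2⟩ := List.append_sublist_iff.1 hu'
    have hperm : (u1 ++ a :: u2).Perm (w1 ++ a :: w2) := by
      refine List.perm_middle.trans (List.Perm.trans ?_ List.perm_middle.symm)
      rw [hw]
    refine ⟨w1 ++ a :: w2, isMove_of_append _ _ _ _ _ hw, ?_⟩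
    refine reachIn_move _ k _ (s1 ++ a :: s2) (hperm.nodup_iff.1 hn) (hperm.symm.trans hp)
      (g1.append (g2.cons_cons a)) (h1.append (h2.cons_cons a)) ?_
    rw [← hperm.length_eq, hl]
    simp only [List.length_append, List.length_cons]
    omega

theorem reachIn_delIns_of_move {α : Type*} : ∀ (m : ℕ) (u v : List α), ReachIn IsMove m u v →
    ReachIn IsDelIns (2 * m) u v
  | 0, _, _, h => h
  | m+1, u, v, ⟨w, ⟨i, j, hw⟩, hr⟩ => by
    refine ⟨u.eraseIdx i, Or.inl ⟨i, rfl⟩, w, Or.inr ⟨j, u.get i, ?_, hw⟩,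
      reachIn_delIns_of_move m w v hr⟩
    have := List.length_eraseIdx_add_one i.2
    have := j.2
    omega

/-- For every `n ≥ 1` and all `σ, π ∈ S_n`, the minimum total number of single-element
deletions and insertions needed to transform the one-line notation of `σ` into that of
`π` equals twice the translocation distance of `σ` and `π`. -/
theorem delInsDist_eq_two_mul_translocDist (n : ℕ) (hn : 1 ≤ n)
    (σ π : Equiv.Perm (Fin n)) :
    delInsDist (oneLine σ) (oneLine π) = 2 * translocDist σ π := by
  have nd : (oneLine σ).Nodup := List.nodup_ofFn.2 σ.injective
  have nd' : (oneLine π).Nodup := List.nodup_ofFn.2 π.injective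
  have hp : (oneLine σ).Perm (oneLine π) := by
    rw [List.perm_ext_iff_of_nodup nd nd']
    intro a
    simp [oneLine, List.mem_ofFn, σ.surjective a, π.surjective a]
  have hT : ReachIn IsMove (translocDist σ π) (oneLine σ) (oneLine π) :=
    Nat.sInf_mem (s := {m | ReachIn IsMove m (oneLine σ) (oneLine π)})
      ⟨(oneLine σ).length, reachIn_move _ _ _ [] nd hp (List.nil_sublist _)
        (List.nil_sublist _) (by simp)⟩
  have hD := reachIn_delIns_of_move _ _ _ hT
  have hD' : ReachIn IsDelIns (delInsDist (oneLine σ) (oneLine π)) (oneLine σ) (oneLine π) :=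
    Nat.sInf_mem (s := {m | ReachIn IsDelIns m (oneLine σ) (oneLine π)}) ⟨_, hD⟩
  refine le_antisymm (Nat.sInf_le hD) ?_
  obtain ⟨s, hs1, hs2, hl⟩ := exists_common_sublist _ _ _ hD'
  have hle := hs1.length_le
  have hk := reachIn_move _ ((oneLine σ).length - s.length) _ s nd hp hs1 hs2 (by omega)
  have ht : translocDist σ π ≤ (oneLine σ).length - s.length := Nat.sInf_le hk
  have := hp.length_eq
  omega
end

section
/- For every n ≥ 2 and all permutations σ, π ∈ S_n, the translocation distance satisfies dτ(σ,π)/(n−1) ≤ d∘(σ,π) ≤ dτ(σ,π), where dτ denotes the Kendall tau distance. -/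
/-- `IsAdjSwap l l'` holds if `l'` is obtained from `l` by an adjacent transposition,
i.e. a translocation `φ(i,i+1)` or `φ(i+1,i)`. -/
def IsAdjSwap {α : Type*} (l l' : List α) : Prop :=
  ∃ i j : Fin l.length, ((j : ℕ) = (i : ℕ) + 1 ∨ (i : ℕ) = (j : ℕ) + 1) ∧
    l' = (l.eraseIdx i).insertIdx j (l.get i)

/-- The Kendall tau distance: the minimum number of adjacent transpositions
transforming `σ` into `π`. -/
noncomputable def kendallDist {n : ℕ} (σ π : Equiv.Perm (Fin n)) : ℕ :=
  sInf {m | ReachIn IsAdjSwap m (oneLine σ) (oneLine π)}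

theorem ReachIn.trans' {α : Type*} {step : List α → List α → Prop} {a b : ℕ} {l₁ l₂ l₃ : List α}
    (h : ReachIn step a l₁ l₂) (h' : ReachIn step b l₂ l₃) : ReachIn step (a + b) l₁ l₃ := by
  induction a generalizing l₁ with
  | zero =>
    have h0 : l₁ = l₂ := h
    subst h0
    simpa using h'
  | succ a ih =>
    obtain ⟨l, hs, hr⟩ := h
    rw [Nat.add_right_comm]
    exact ⟨l, hs, ih hr⟩

theorem ReachIn.one' {α : Type*} {step : List α → List α → Prop} {l₁ l₂ : List α}
    (h : step l₁ l₂) : ReachIn step 1 l₁ l₂ := ⟨l₂, h, rfl⟩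

theorem ReachIn.mono' {α : Type*} {s t : List α → List α → Prop} (hst : ∀ a b, s a b → t a b)
    {m : ℕ} {l₁ l₂ : List α} (h : ReachIn s m l₁ l₂) : ReachIn t m l₁ l₂ := by
  induction m generalizing l₁ with
  | zero => exact h
  | succ a ih =>
    obtain ⟨l, hs, hr⟩ := h
    exact ⟨l, hst _ _ hs, ih hr⟩

theorem isAdjSwap_insert {α : Type*} (M : List α) (x : α) (a b : ℕ) (ha : a ≤ M.length)
    (hb : b ≤ M.length) (hab : b = a + 1 ∨ a = b + 1) :
    IsAdjSwap (M.insertIdx a x) (M.insertIdx b x) := by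
  have hl : (M.insertIdx a x).length = M.length + 1 := List.length_insertIdx_of_le_length ha x
  refine ⟨⟨a, by omega⟩, ⟨b, by omega⟩, hab, ?_⟩
  simp [List.eraseIdx_insertIdx_self]

theorem reach_up {α : Type*} (M : List α) (x : α) (a k : ℕ) (ha : a + k ≤ M.length) :
    ReachIn IsAdjSwap k (M.insertIdx a x) (M.insertIdx (a + k) x) := by
  induction k with
  | zero => rfl
  | succ k ih =>
    exact (ih (by omega)).trans' (.one' (isAdjSwap_insert M x _ _ (by omega) ha (by omega)))

theorem reach_down {α : Type*} (M : List α) (x : α) (a k : ℕ) (ha : a + k ≤ M.length) :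
    ReachIn IsAdjSwap k (M.insertIdx (a + k) x) (M.insertIdx a x) := by
  induction k with
  | zero => rfl
  | succ k ih =>
    exact ⟨_, isAdjSwap_insert M x _ (a + k) (by omega) (by omega) (by omega), ih (by omega)⟩

theorem IsMove.reach {α : Type*} {l l' : List α} (h : IsMove l l') :
    l'.length = l.length ∧ ∃ k ≤ l.length - 1, ReachIn IsAdjSwap k l l' := by
  obtain ⟨⟨i, hi⟩, ⟨j, hj⟩, rfl⟩ := h
  have hM : (l.eraseIdx i).length = l.length - 1 := List.length_eraseIdx_of_lt hi
  have hl : (l.eraseIdx i).insertIdx i (l[i]) = l := by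
    exact List.insertIdx_eraseIdx_getElem hi
  refine ⟨?_, ?_⟩
  · simp only
    rw [List.length_insertIdx_of_le_length (by omega)]
    omega
  rcases le_total i j with h | h
  · obtain ⟨k, rfl⟩ := Nat.exists_eq_add_of_le h
    refine ⟨k, by omega, ?_⟩
    have := reach_up (l.eraseIdx i) l[i] i k (by omega)
    rw [hl] at this
    exact this
  · obtain ⟨k, rfl⟩ := Nat.exists_eq_add_of_le h
    refine ⟨k, by omega, ?_⟩
    have := reach_down (l.eraseIdx (j + k)) l[j + k] j k (by omega)
    rw [hl] at this
    exact this

theorem reach_moves {α : Type*} {m : ℕ} {l l' : List α} (h : ReachIn IsMove m l l') :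
    ∃ k ≤ m * (l.length - 1), ReachIn IsAdjSwap k l l' := by
  induction m generalizing l with
  | zero => exact ⟨0, by simp, h⟩
  | succ m ih =>
    obtain ⟨l₁, hs, hr⟩ := h
    obtain ⟨hlen, k, hk, hk'⟩ := hs.reach
    obtain ⟨k₂, hk₂, hk₂'⟩ := ih hr
    rw [hlen] at hk₂
    exact ⟨k + k₂, by rw [Nat.succ_mul]; omega, hk'.trans' hk₂'⟩

theorem IsAdjSwap.cons' {α : Type*} (x : α) {l l' : List α} (h : IsAdjSwap l l') :
    IsAdjSwap (x :: l) (x :: l') := by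
  obtain ⟨⟨i, hi⟩, ⟨j, hj⟩, hij, rfl⟩ := h
  refine ⟨⟨i + 1, by simpa using hi⟩, ⟨j + 1, by simpa using hj⟩, ?_, ?_⟩
  · simp only at hij ⊢
    omega
  · simp

theorem reach_cons {α : Type*} (x : α) {m : ℕ} {l l' : List α} (h : ReachIn IsAdjSwap m l l') :
    ReachIn IsAdjSwap m (x :: l) (x :: l') := by
  induction m generalizing l with
  | zero => exact congrArg (x :: ·) h
  | succ m ih =>
    obtain ⟨l₁, hs, hr⟩ := h
    exact ⟨_, hs.cons' x, ih hr⟩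

theorem reach_perm {α : Type*} {l l' : List α} (h : l.Perm l') :
    ∃ m, ReachIn IsAdjSwap m l l' := by
  induction h with
  | nil => exact ⟨0, rfl⟩
  | cons x _ ih => exact ⟨_, reach_cons x ih.choose_spec⟩
  | swap x y l => exact ⟨1, .one' ⟨⟨0, by simp⟩, ⟨1, by simp⟩, by simp, by simp⟩⟩
  | trans _ _ ih₁ ih₂ => exact ⟨_, ih₁.choose_spec.trans' ih₂.choose_spec⟩

theorem oneLine_perm {n : ℕ} (σ π : Equiv.Perm (Fin n)) : (oneLine σ).Perm (oneLine π) := by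
  unfold oneLine
  rw [List.perm_ext_iff_of_nodup (List.nodup_ofFn.2 σ.injective) (List.nodup_ofFn.2 π.injective)]
  intro a
  simp only [List.mem_ofFn]
  exact ⟨fun _ => π.surjective a, fun _ => σ.surjective a⟩

/-- For every `n ≥ 2` and all `σ, π ∈ S_n`,
`dτ(σ,π)/(n−1) ≤ d∘(σ,π) ≤ dτ(σ,π)`. -/
theorem kendall_bounds_translocDist (n : ℕ) (hn : 2 ≤ n) (σ π : Equiv.Perm (Fin n)) :
    (kendallDist σ π : ℝ) / ((n : ℝ) - 1) ≤ (translocDist σ π : ℝ) ∧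
    translocDist σ π ≤ kendallDist σ π := by
  have hk : ReachIn IsAdjSwap (kendallDist σ π) (oneLine σ) (oneLine π) :=
    Nat.sInf_mem (s := {m | ReachIn IsAdjSwap m (oneLine σ) (oneLine π)})
      (reach_perm (oneLine_perm σ π))
  have hk' : ReachIn IsMove (kendallDist σ π) (oneLine σ) (oneLine π) :=
    hk.mono' (fun a b ⟨i, j, _, h⟩ => ⟨i, j, h⟩)
  have ht : ReachIn IsMove (translocDist σ π) (oneLine σ) (oneLine π) :=
    Nat.sInf_mem (s := {m | ReachIn IsMove m (oneLine σ) (oneLine π)}) ⟨_, hk'⟩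
  refine ⟨?_, Nat.sInf_le hk'⟩
  obtain ⟨k, hkle, hkr⟩ := reach_moves ht
  have h1 : kendallDist σ π ≤ k := Nat.sInf_le hkr
  have hlen : (oneLine σ).length = n := by simp [oneLine]
  rw [hlen] at hkle
  have h2 : kendallDist σ π ≤ translocDist σ π * (n - 1) := h1.trans hkle
  have hn' : (2 : ℝ) ≤ n := by exact_mod_cast hn
  rw [div_le_iff₀ (by linarith)]
  have h3 : ((kendallDist σ π : ℕ) : ℝ) ≤ ((translocDist σ π * (n - 1) : ℕ) : ℝ) := by
    exact_mod_cast h2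
  rwa [Nat.cast_mul, Nat.cast_sub (by omega), Nat.cast_one] at h3
end

section
/- For every n ≥ 1, the diameter of S_n under the translocation distance equals n − 1; that is, d∘(σ,π) ≤ n − 1 for all σ, π ∈ S_n, and there exist σ, π ∈ S_n with d∘(σ,π) = n − 1. -/
theorem isMove_front {α : Type*} (a b : List α) (x : α) :
    IsMove (a ++ x :: b) (x :: (a ++ b)) := by
  refine ⟨⟨a.length, by simp⟩, ⟨0, by simp⟩, ?_⟩
  simp [List.eraseIdx_append_of_length_le]

theorem isMove_cons {α : Type*} {l l' : List α} (x : α) (h : IsMove l l') :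
    IsMove (x :: l) (x :: l') := by
  obtain ⟨i, j, rfl⟩ := h
  exact ⟨i.succ, j.succ, by simp⟩

theorem reachIn_cons {α : Type*} (x : α) (m : ℕ) : ∀ {l l' : List α},
    ReachIn IsMove m l l' → ReachIn IsMove m (x :: l) (x :: l') := by
  induction m with
  | zero => intro l l' h; exact congrArg (x :: ·) h
  | succ m ih =>
    rintro l l' ⟨l'', h1, h2⟩
    exact ⟨x :: l'', isMove_cons x h1, ih h2⟩

theorem reachIn_of_perm {α : Type*} (m : ℕ) : ∀ {l l' : List α},
    l.Perm l' → l'.length = m + 1 → ReachIn IsMove m l l' := by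
  induction m with
  | zero =>
    intro l l' h hl
    obtain ⟨a, rfl⟩ := List.length_eq_one_iff.mp hl
    exact List.perm_singleton.mp h
  | succ m ih =>
    intro l l' h hl
    cases l' with
    | nil => simp at hl
    | cons x t =>
      have hx : x ∈ l := h.symm.subset (by simp)
      obtain ⟨a, b, rfl⟩ := List.append_of_mem hx
      have h2 : (a ++ b).Perm t :=
        (List.perm_cons x).mp (List.perm_middle.symm.trans h)
      exact ⟨_, isMove_front a b x, reachIn_cons x m (ih h2 (by simpa using hl))⟩

theorem sublist_eraseIdx {α : Type*} {s l : List α} (h : s.Sublist l) : ∀ j : ℕ,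
    ∃ s' : List α, s'.Sublist s ∧ s'.Sublist (l.eraseIdx j) ∧ s.length ≤ s'.length + 1 := by
  induction h with
  | slnil => intro j; exact ⟨[], by simp⟩
  | @cons s l a h ih =>
    intro j
    cases j with
    | zero => exact ⟨s, List.Sublist.refl _, by simpa using h, by simp⟩
    | succ j =>
      obtain ⟨s', h1, h2, h3⟩ := ih j
      exact ⟨s', h1, by simpa using h2.cons a, h3⟩
  | @cons_cons s l a h ih =>
    intro j
    cases j with
    | zero => exact ⟨s, by simp, by simpa using h, by simp⟩
    | succ j =>
      obtain ⟨s', h1, h2, h3⟩ := ih j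
      exact ⟨a :: s', by simpa using h1, by simpa using h2, by simpa using h3⟩

theorem isMove_sublist {α : Type*} {l l' : List α} (h : IsMove l l') :
    ∃ j : ℕ, (l'.eraseIdx j).Sublist l := by
  obtain ⟨i, j, rfl⟩ := h
  exact ⟨j, by rw [List.eraseIdx_insertIdx_self]; exact List.eraseIdx_sublist _ _⟩

theorem reachIn_common {α : Type*} (m : ℕ) : ∀ {l l' : List α}, ReachIn IsMove m l l' →
    ∃ s : List α, s.Sublist l ∧ s.Sublist l' ∧ l'.length ≤ s.length + m := by
  induction m with
  | zero =>
    intro l l' h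
    obtain rfl : l = l' := h
    exact ⟨l, by simp⟩
  | succ m ih =>
    rintro l l' ⟨l'', h1, h2⟩
    obtain ⟨s, hs1, hs2, hs3⟩ := ih h2
    obtain ⟨j, hj⟩ := isMove_sublist h1
    obtain ⟨s', h3, h4, h5⟩ := sublist_eraseIdx hs1 j
    exact ⟨s', h4.trans hj, h3.trans hs2, by omega⟩

theorem reachIn_oneLine {n : ℕ} (hn : 1 ≤ n) (σ π : Equiv.Perm (Fin n)) :
    ReachIn IsMove (n - 1) (oneLine σ) (oneLine π) :=
  reachIn_of_perm _ (oneLine_perm σ π) (by simp [oneLine]; omega)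

/-- For every `n ≥ 1`, the diameter of `S_n` under the translocation distance equals
`n − 1`: every pair of permutations is at distance at most `n − 1`, and some pair is
at distance exactly `n − 1`. -/
theorem translocDist_diameter (n : ℕ) (hn : 1 ≤ n) :
    (∀ σ π : Equiv.Perm (Fin n), translocDist σ π ≤ n - 1) ∧
    (∃ σ π : Equiv.Perm (Fin n), translocDist σ π = n - 1) := by
  have up : ∀ σ π : Equiv.Perm (Fin n), translocDist σ π ≤ n - 1 :=
    fun σ π => Nat.sInf_le (reachIn_oneLine hn σ π)
  refine ⟨up, Fin.revPerm, Equiv.refl _, le_antisymm (up _ _) ?_⟩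
  have hm : ReachIn IsMove (translocDist (Fin.revPerm : Equiv.Perm (Fin n)) (Equiv.refl _))
      (oneLine Fin.revPerm) (oneLine (Equiv.refl _)) :=
    Nat.sInf_mem (s := {m | ReachIn IsMove m (oneLine Fin.revPerm) (oneLine (Equiv.refl _))})
      ⟨_, reachIn_oneLine hn _ _⟩
  obtain ⟨s, h1, h2, h3⟩ := reachIn_common _ hm
  have p1 : (oneLine (Fin.revPerm : Equiv.Perm (Fin n))).Pairwise (· > ·) := by
    rw [oneLine, List.pairwise_ofFn]
    intro i j hij
    simpa using hij
  have p2 : (oneLine (Equiv.refl (Fin n))).Pairwise (· < ·) := by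
    rw [oneLine, List.pairwise_ofFn]
    intro i j hij
    simpa using hij
  have q1 := p1.sublist h1
  have q2 := p2.sublist h2
  have hs : s.length ≤ 1 := by
    match s, q1, q2 with
    | [], _, _ => simp
    | [_], _, _ => simp
    | a :: b :: t, q1, q2 =>
      have r1 : a > b := List.rel_of_pairwise_cons q1 (by simp)
      have r2 : a < b := List.rel_of_pairwise_cons q2 (by simp)
      exact absurd r1 (lt_asymm r2)
  have : (oneLine (Equiv.refl (Fin n))).length = n := by simp [oneLine]
  omega
end

section
/- For every n ≥ 1 and all permutations σ, π ∈ S_n, the translocation distance satisfies dH(σ,π)/n ≤ d∘(σ,π) ≤ dH(σ,π), where dH denotes the Hamming distance. -/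
/-- The Hamming distance between two permutations: the number of positions at which
their one-line notations differ. -/
def permHammingDist {n : ℕ} (σ π : Equiv.Perm (Fin n)) : ℕ :=
  (Finset.univ.filter fun i => σ i ≠ π i).card

theorem exists_insert_of_sublist {α : Type*} {s l : List α} (h : s.Sublist l) :
    s.length < l.length → ∃ s1 x s2, s = s1 ++ s2 ∧ (s1 ++ x :: s2).Sublist l := by
  induction h with
  | slnil => intro h; simp at h
  | cons a h ih => intro _; exact ⟨[], a, _, rfl, by simpa using h⟩
  | cons_cons a h ih =>
    intro hl
    obtain ⟨s1, x, s2, rfl, h2⟩ := ih (by simpa using hl)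
    exact ⟨a :: s1, x, s2, rfl, by simpa using h2⟩

theorem exists_move {α : Type*} {s1 s2 l : List α} {x : α} (hl : l.Nodup)
    (hx : x ∈ l) (hxs : x ∉ s1 ++ s2) (h : (s1 ++ s2).Sublist l) :
    ∃ l', IsMove l l' ∧ l'.Perm l ∧ (s1 ++ x :: s2).Sublist l' := by
  classical
  obtain ⟨i, hi, rfl⟩ := List.getElem_of_mem hx
  have h1 : (s1 ++ s2).Sublist (l.eraseIdx i) := by
    have := h.erase l[i]
    rwa [List.erase_of_not_mem hxs, hl.erase_getElem i hi] at this
  obtain ⟨m1, m2, hm, h1, h2⟩ := List.append_sublist_iff.mp h1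
  have hlen := List.length_eraseIdx_of_lt hi
  rw [hm, List.length_append] at hlen
  have hins : (l.eraseIdx i).insertIdx m1.length l[i] = m1 ++ l[i] :: m2 := by
    rw [hm]
    generalize l[i] = y
    clear * -
    induction m1 with
    | nil => simp
    | cons a t ih => simpa using ih
  refine ⟨m1 ++ l[i] :: m2, ⟨⟨i, hi⟩, ⟨m1.length, by omega⟩, ?_⟩, ?_, ?_⟩
  · simpa using hins.symm
  · refine List.perm_middle.trans ?_
    rw [← hm]
    exact List.getElem_cons_eraseIdx_perm hi
  · exact h1.append (h2.cons_cons _)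

theorem reachIn_of_sublist {α : Type*} {l' : List α} (hl' : l'.Nodup) (k : ℕ) :
    ∀ s l : List α, l.Perm l' → s.Sublist l → s.Sublist l' → l.length = s.length + k →
      ReachIn IsMove k l l' := by
  induction k with
  | zero =>
    intro s l hp h1 h2 hk
    have e1 := h1.eq_of_length (by omega)
    have e2 := h2.eq_of_length (by have := hp.length_eq; omega)
    exact e1.symm.trans e2
  | succ k ih =>
    intro s l hp h1 h2 hk
    obtain ⟨s1, x, s2, rfl, h3⟩ := exists_insert_of_sublist h2 (by have := hp.length_eq; omega)
    have hx : x ∈ l := hp.mem_iff.mpr (h3.subset (by simp))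
    have hxs : x ∉ s1 ++ s2 := by
      have := (List.nodup_middle.mp (hl'.sublist h3))
      exact (List.nodup_cons.mp this).1
    obtain ⟨m, hm, hmp, hms⟩ := exists_move (hp.nodup_iff.mpr hl') hx hxs h1
    refine ⟨m, hm, ih _ m (hmp.trans hp) hms h3 ?_⟩
    have := hmp.length_eq
    simp at hk ⊢
    omega

theorem reachIn_hamming {n : ℕ} (σ π : Equiv.Perm (Fin n)) :
    ReachIn IsMove (permHammingDist σ π) (oneLine σ) (oneLine π) := by
  have hσ : oneLine σ = (List.finRange n).map σ := List.ofFn_eq_map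
  have hπ : oneLine π = (List.finRange n).map π := List.ofFn_eq_map
  have key : ((List.finRange n).filter (fun i => σ i = π i)).map σ
      = ((List.finRange n).filter (fun i => σ i = π i)).map π := by
    apply List.map_congr_left
    intro a ha
    simpa using (List.mem_filter.mp ha).2
  have hnπ : (oneLine π).Nodup := List.nodup_ofFn.mpr π.injective
  have hnσ : (oneLine σ).Nodup := List.nodup_ofFn.mpr σ.injective
  apply reachIn_of_sublist hnπ _ (((List.finRange n).filter (fun i => σ i = π i)).map σ)
  · rw [List.perm_ext_iff_of_nodup hnσ hnπ]
    intro a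
    simp [oneLine, List.mem_ofFn, σ.surjective a, π.surjective a]
  · rw [hσ]; exact List.filter_sublist.map _
  · rw [hπ, key]; exact List.filter_sublist.map _
  · have h1 : ((List.finRange n).filter (fun i => σ i = π i)).length
        = (Finset.univ.filter fun i => σ i = π i).card := by
      rw [← List.toFinset_card_of_nodup ((List.nodup_finRange n).filter _)]
      congr 1
      ext; simp
    have h2 := Finset.card_filter_add_card_filter_not (s := (Finset.univ : Finset (Fin n)))
      (fun i => σ i = π i)
    rw [List.length_map, h1]
    simp only [oneLine, List.length_ofFn, permHammingDist]
    simpa using h2.symm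

/-- For every `n ≥ 1` and all `σ, π ∈ S_n`,
`dH(σ,π)/n ≤ d∘(σ,π) ≤ dH(σ,π)`. -/
theorem hamming_bounds_translocDist (n : ℕ) (hn : 1 ≤ n) (σ π : Equiv.Perm (Fin n)) :
    (permHammingDist σ π : ℝ) / (n : ℝ) ≤ (translocDist σ π : ℝ) ∧
    translocDist σ π ≤ permHammingDist σ π := by
  refine ⟨?_, Nat.sInf_le (reachIn_hamming σ π)⟩
  have hmem : ReachIn IsMove (translocDist σ π) (oneLine σ) (oneLine π) :=
    Nat.sInf_mem (s := {m | ReachIn IsMove m (oneLine σ) (oneLine π)}) ⟨_, reachIn_hamming σ π⟩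
  have hn' : (0 : ℝ) < n := by exact_mod_cast hn
  rw [div_le_iff₀ hn']
  norm_cast
  rcases Nat.eq_zero_or_pos (translocDist σ π) with h0 | hpos
  · rw [h0] at hmem
    have he : (σ : Fin n → Fin n) = π := List.ofFn_injective hmem
    simp [permHammingDist, he]
  · have : permHammingDist σ π ≤ n := by
      simpa [permHammingDist] using
        Finset.card_filter_le (Finset.univ : Finset (Fin n)) (fun i => σ i ≠ π i)
    nlinarith
end

section
/- For every n ≥ 2 and all permutations σ, π ∈ S_n, the translocation distance satisfies dT(σ,π)/(n−1) ≤ d∘(σ,π) ≤ 2·dT(σ,π), where dT denotes the transposition (Cayley) distance. -/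
/-- The transposition (Cayley) distance: the minimum number of transpositions
transforming `σ` into `π`. -/
noncomputable def cayleyDist {n : ℕ} (σ π : Equiv.Perm (Fin n)) : ℕ :=
  sInf {m | ∃ L : List (Equiv.Perm (Fin n)), L.length = m ∧
    (∀ τ ∈ L, ∃ a b : Fin n, a ≠ b ∧ τ = Equiv.swap a b) ∧ π = σ * L.prod}

theorem swaps_of_support {n : ℕ} (k : ℕ) : ∀ f : Equiv.Perm (Fin n), f.support.card ≤ k + 1 →
    ∃ L : List (Equiv.Perm (Fin n)), L.length ≤ k ∧
      (∀ τ ∈ L, ∃ a b : Fin n, a ≠ b ∧ τ = Equiv.swap a b) ∧ f = L.prod := by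
  induction k with
  | zero =>
    intro f hf
    exact ⟨[], by simp, by simp, by
      simpa using Equiv.Perm.card_support_le_one.mp hf⟩
  | succ k ih =>
    intro f hf
    by_cases h1 : f = 1
    · exact ⟨[], by simp, by simp, by simpa using h1⟩
    · obtain ⟨x, hx⟩ : ∃ x, f x ≠ x := by
        by_contra h
        push Not at h
        exact h1 (Equiv.ext h)
      have h2 := Equiv.Perm.card_support_swap_mul hx
      obtain ⟨L, hL, hs, hp⟩ := ih (Equiv.swap x (f x) * f) (by omega)
      refine ⟨Equiv.swap x (f x) :: L, by simpa using hL, ?_, ?_⟩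
      · intro τ hτ
        rcases List.mem_cons.mp hτ with h | h
        · exact ⟨x, f x, hx.symm, h⟩
        · exact hs τ h
      · rw [List.prod_cons, ← hp, ← mul_assoc, Equiv.swap_mul_self, one_mul]

theorem exists_swaps {n : ℕ} (hn : 2 ≤ n) (σ π : Equiv.Perm (Fin n)) :
    ∃ L : List (Equiv.Perm (Fin n)), L.length ≤ n - 1 ∧
      (∀ τ ∈ L, ∃ a b : Fin n, a ≠ b ∧ τ = Equiv.swap a b) ∧ π = σ * L.prod := by
  obtain ⟨L, h1, h2, h3⟩ := swaps_of_support (n - 1) (σ⁻¹ * π) (by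
    have := Finset.card_le_univ (σ⁻¹ * π).support
    simp only [Fintype.card_fin] at this
    omega)
  exact ⟨L, h1, h2, by rw [← h3]; simp⟩

theorem swap_moves_aux {α : Type*} (A B C : List α) (x y : α) :
    ReachIn IsMove 2 (A ++ x :: (B ++ y :: C)) (A ++ y :: (B ++ x :: C)) := by
  have e1 : ∀ (P Q R : List α) (z : α),
      IsMove (P ++ z :: (Q ++ R)) (P ++ Q ++ z :: R) := by
    intro P Q R z
    refine ⟨⟨P.length, by simp⟩, ⟨(P ++ Q).length, by simp⟩, ?_⟩
    apply List.ext_getElem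
    · simp [List.length_insertIdx, List.length_eraseIdx]; grind
    · intro i h1 h2
      simp only [List.getElem_insertIdx, List.getElem_eraseIdx, List.getElem_append, List.get_eq_getElem, List.getElem_cons]
      grind
  have e2 : ∀ (P Q R : List α) (z : α),
      IsMove (P ++ Q ++ z :: R) (P ++ z :: (Q ++ R)) := by
    intro P Q R z
    refine ⟨⟨(P ++ Q).length, by simp⟩, ⟨P.length, by simp⟩, ?_⟩
    apply List.ext_getElem
    · simp [List.length_insertIdx, List.length_eraseIdx]; grind
    · intro i h1 h2
      simp only [List.getElem_insertIdx, List.getElem_eraseIdx, List.getElem_append, List.get_eq_getElem, List.getElem_cons]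
      grind
  refine ⟨A ++ (B ++ [y]) ++ x :: C, ?_, A ++ y :: (B ++ x :: C), ?_, rfl⟩
  · simpa using e1 A (B ++ [y]) C x
  · simpa using e2 A B (x :: C) y

theorem swap_moves {n : ℕ} (σ : Equiv.Perm (Fin n)) (a b : Fin n) (hab : a < b) :
    ReachIn IsMove 2 (oneLine σ) (oneLine (σ * Equiv.swap a b)) := by
  have hl : (oneLine σ).length = n := by simp [oneLine]
  set l := oneLine σ with hldef
  have hab' : (a : ℕ) < b := hab
  have hb := b.isLt
  have key := swap_moves_aux (l.take a) ((l.drop (a + 1)).take (b - a - 1)) (l.drop (b + 1))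
    (σ a) (σ b)
  convert key using 1
  · apply List.ext_getElem
    · simp [hl]; omega
    · intro i h1 h2
      simp only [List.getElem_append, List.getElem_cons, List.getElem_take, List.getElem_drop,
        List.length_take, List.length_drop]
      simp only [hldef, oneLine, List.getElem_ofFn, List.length_ofFn]
      split_ifs <;> congr 1 <;> ext <;> simp <;> omega
  · apply List.ext_getElem
    · simp [hl, oneLine]; omega
    · intro i h1 h2
      simp only [List.getElem_append, List.getElem_cons, List.getElem_take, List.getElem_drop,
        List.length_take, List.length_drop]
      simp only [hldef, oneLine, List.getElem_ofFn, List.length_ofFn, Equiv.Perm.mul_apply,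
        Equiv.swap_apply_def, Fin.ext_iff]
      split_ifs <;> first | omega | rfl |
        (refine congrArg (fun z => ((σ z : Fin n) : ℕ)) (Fin.ext ?_); simp; omega)

theorem reach_trans {α : Type*} {step : List α → List α → Prop} (p q : ℕ) :
    ∀ {l l' l'' : List α}, ReachIn step p l l' → ReachIn step q l' l'' →
      ReachIn step (q + p) l l'' := by
  induction p with
  | zero => intro l l' l'' h h'; cases h; exact h'
  | succ p ih =>
    rintro l l' l'' ⟨x, hx, h⟩ h'
    exact ⟨x, hx, ih h h'⟩

theorem reach_of_swaps {n : ℕ} (L : List (Equiv.Perm (Fin n))) :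
    ∀ σ : Equiv.Perm (Fin n), (∀ τ ∈ L, ∃ a b : Fin n, a ≠ b ∧ τ = Equiv.swap a b) →
      ReachIn IsMove (2 * L.length) (oneLine σ) (oneLine (σ * L.prod)) := by
  induction L with
  | nil => intro σ _; simp [ReachIn]
  | cons t L ih =>
    intro σ h
    obtain ⟨a, b, hab, rfl⟩ := h t (by simp)
    have h2 := ih (σ * Equiv.swap a b) (fun τ hτ => h τ (by simp [hτ]))
    have h1 : ReachIn IsMove 2 (oneLine σ) (oneLine (σ * Equiv.swap a b)) := by
      rcases lt_or_gt_of_ne hab with hlt | hlt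
      · exact swap_moves σ a b hlt
      · rw [Equiv.swap_comm]; exact swap_moves σ b a hlt
    have h3 := reach_trans _ _ h1 h2
    rw [List.prod_cons, ← mul_assoc]
    exact h3

/-- For every `n ≥ 2` and all `σ, π ∈ S_n`,
`dT(σ,π)/(n−1) ≤ d∘(σ,π) ≤ 2·dT(σ,π)`, where `dT` is the Cayley distance. -/
theorem cayley_bounds_translocDist (n : ℕ) (hn : 2 ≤ n) (σ π : Equiv.Perm (Fin n)) :
    (cayleyDist σ π : ℝ) / ((n : ℝ) - 1) ≤ (translocDist σ π : ℝ) ∧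
    translocDist σ π ≤ 2 * cayleyDist σ π := by
  obtain ⟨L, hL, hs, hp⟩ := exists_swaps hn σ π
  have hc : cayleyDist σ π ≤ n - 1 := le_trans (Nat.sInf_le ⟨L, rfl, hs, hp⟩) hL
  have hr := reach_of_swaps L σ hs
  rw [← hp] at hr
  have hm : ReachIn IsMove (translocDist σ π) (oneLine σ) (oneLine π) :=
    Nat.sInf_mem (s := {m | ReachIn IsMove m (oneLine σ) (oneLine π)}) ⟨_, hr⟩
  constructor
  · have hn' : (2 : ℝ) ≤ n := by exact_mod_cast hn
    rw [div_le_iff₀ (by linarith)]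
    rcases Nat.eq_zero_or_pos (translocDist σ π) with h0 | h0
    · rw [h0] at hm
      have he : σ = π := by
        have : List.ofFn σ = List.ofFn π := hm
        exact Equiv.coe_fn_injective (List.ofFn_injective this)
      have hz : cayleyDist σ π = 0 :=
        Nat.le_zero.mp (Nat.sInf_le ⟨[], rfl, by simp, by simp [he]⟩)
      simp [hz, h0]
    · have h1 : (1 : ℝ) ≤ translocDist σ π := by exact_mod_cast h0
      have h2 : (cayleyDist σ π : ℝ) ≤ n - 1 := by
        have h3 : cayleyDist σ π + 1 ≤ n := by omega
        have h4 : (cayleyDist σ π : ℝ) + 1 ≤ n := by exact_mod_cast h3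
        linarith
      nlinarith
  · obtain ⟨M, hM, hMs, hMp⟩ := Nat.sInf_mem (s := {m | ∃ L : List (Equiv.Perm (Fin n)),
      L.length = m ∧ (∀ τ ∈ L, ∃ a b : Fin n, a ≠ b ∧ τ = Equiv.swap a b) ∧ π = σ * L.prod})
      ⟨_, L, rfl, hs, hp⟩
    have h := reach_of_swaps M σ hMs
    rw [← hMp, hM] at h
    exact Nat.sInf_le h
end

section
/- For all integers n and d with n ≥ d ≥ 1, the maximum size A∘(n,d) of a subset of S_n whose distinct elements are at pairwise translocation distance at least d satisfies A∘(n,d) ≤ (n−d+1)!. -/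
/-- `maxTranslocCode n d` is the maximum size of a subset of the symmetric group on
`n` elements whose distinct elements are at pairwise translocation distance at least `d`. -/
noncomputable def maxTranslocCode (n d : ℕ) : ℕ :=
  sSup {M | ∃ C : Finset (Equiv.Perm (Fin n)), C.card = M ∧
    ∀ σ ∈ C, ∀ π ∈ C, σ ≠ π → d ≤ translocDist σ π}


theorem reach_of_filter_eq {α : Type*} [DecidableEq α] (l' : List α) (hl' : l'.Nodup) (m : ℕ) :
    ∀ (p : α → Bool) (l : List α), l.Perm l' → l.filter p = l'.filter p →
      (l.filter p).length + m = l.length → ReachIn IsMove m l l' := by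
  induction m with
  | zero =>
    intro p l hperm hf hlen
    have h1 : l.filter p = l := List.filter_sublist.eq_of_length (by omega)
    have h2 : l'.filter p = l' := by
      refine List.filter_sublist.eq_of_length ?_
      have := hperm.length_eq
      rw [← hf]; omega
    change l = l'
    rw [← h1, hf, h2]
  | succ m ih =>
    intro p l hperm hf hlen
    have hx : ∃ x ∈ l, ¬ p x = true := by
      by_contra! h
      rw [List.filter_eq_self.2 h] at hlen
      omega
    obtain ⟨x, hxl, hpx⟩ := hx
    obtain ⟨a, b, rfl⟩ := List.append_of_mem hxl
    obtain ⟨c, d, rfl⟩ := List.append_of_mem (hperm.mem_iff.1 hxl)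
    have hab : (a ++ b).filter p = c.filter p ++ d.filter p := by
      simpa [List.filter_append, List.filter_cons, hpx] using hf
    obtain ⟨u, v, huv, hu, hv⟩ := List.filter_eq_append_iff.1 hab
    have hp2 : (u ++ x :: v).Perm (a ++ x :: b) :=
      (List.perm_middle.trans (by rw [← huv])).trans List.perm_middle.symm
    have hp3 := hp2.trans hperm
    have hnd : (u ++ x :: v).Nodup := hp3.nodup_iff.2 hl'
    have key : ∀ s t : List α, (s ++ x :: t).Nodup →
        (s ++ x :: t).filter (fun y => p y || decide (y = x)) = s.filter p ++ x :: t.filter p := by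
      intro s t h
      have h' := (List.perm_middle.nodup_iff.1 h)
      rw [List.nodup_cons, List.mem_append] at h'
      have e : ∀ r : List α, x ∉ r → r.filter (fun y => p y || decide (y = x)) = r.filter p := by
        intro r hr
        apply List.filter_congr
        intro y hy
        have : y ≠ x := fun h => hr (h ▸ hy)
        simp [this]
      rw [List.filter_append, List.filter_cons, e s (fun h => h'.1 (.inl h)),
        e t (fun h => h'.1 (.inr h))]
      simp
    have hlab := congrArg List.length hab
    have hluv := congrArg List.length huv
    refine ⟨u ++ x :: v, ⟨⟨a.length, by simp⟩, ⟨u.length, ?_⟩, ?_⟩, ?_⟩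
    · simp at hluv ⊢; omega
    · have e1 : (a ++ x :: b).eraseIdx a.length = u ++ v := by
        rw [List.eraseIdx_append_of_length_le le_rfl, ← huv]; simp
      simp only [e1]
      have e2 : ∀ (s t : List α) (y : α), (s ++ t).insertIdx s.length y = s ++ y :: t := by
        intro s t y
        induction s with
        | nil => simp
        | cons z s ihs => simp [ihs]
      rw [e2]
      simp
    · apply ih (fun y => p y || decide (y = x)) _ hp3
      · rw [key _ _ hnd, key _ _ hl', hu, hv]
      · rw [key _ _ hnd, hu, hv]
        simp [hpx, List.filter_cons] at hlen hluv hlab ⊢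
        omega

/-- Singleton-type bound: for all `n ≥ d ≥ 1`, `A∘(n,d) ≤ (n−d+1)!`. -/
theorem maxTranslocCode_upper_bound (n d : ℕ) (hd : 1 ≤ d) (hdn : d ≤ n) :
    maxTranslocCode n d ≤ (n - d + 1).factorial := by
  apply csSup_le'
  rintro M ⟨C, rfl, hC⟩
  set T : List (Fin n) := (List.finRange n).take (n - d + 1) with hT
  have hTl : T.length = n - d + 1 := by simp [hT]; omega
  have hTn : T.Nodup := (List.nodup_finRange n).sublist (List.take_sublist _ _)
  have hnd : ∀ σ : Equiv.Perm (Fin n), (oneLine σ).Nodup := fun σ =>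
    List.nodup_ofFn.2 σ.injective
  have hmem : ∀ (σ : Equiv.Perm (Fin n)) x, x ∈ oneLine σ := fun σ x =>
    (List.mem_ofFn' _ _).2 (σ.surjective x)
  have hperm : ∀ σ : Equiv.Perm (Fin n), ((oneLine σ).filter (fun x => decide (x ∈ T))).Perm T := by
    intro σ
    rw [List.perm_ext_iff_of_nodup ((hnd σ).filter _) hTn]
    intro x
    simp [hmem]
  have hcard : C.card ≤ T.permutations.toFinset.card := by
    apply Finset.card_le_card_of_injOn
      (fun σ => (oneLine σ).filter (fun x => decide (x ∈ T)))
    · intro σ _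
      simpa using hperm σ
    · intro σ hσ π hπ h
      by_contra hne
      have h1 := hC σ hσ π hπ hne
      have h2 : ReachIn IsMove (d - 1) (oneLine σ) (oneLine π) := by
        apply reach_of_filter_eq _ (hnd π) _ (fun x => decide (x ∈ T)) _ _ h
        · rw [(hperm σ).length_eq, hTl]
          simp [oneLine]; omega
        · rw [List.perm_ext_iff_of_nodup (hnd σ) (hnd π)]
          simp [hmem]
      have h3 : translocDist σ π ≤ d - 1 := Nat.sInf_le h2
      omega
  calc C.card ≤ _ := hcard
    _ ≤ T.permutations.length := List.toFinset_card_le _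
    _ = _ := by rw [List.length_permutations, hTl]
end

section
/- Let δ ∈ [0,1] and let d : ℕ → ℕ satisfy 1 ≤ d(n) ≤ n for all n ≥ 1 and d(n)/n → δ as n → ∞. Then the asymptotic rate of optimal translocation codes satisfies lim_{n→∞} ln A∘(n,d(n)) / ln(n!) = 1 − δ. -/
section Aux
variable {α : Type*}

lemma insertIdx_mid (p q : List α) (a : α) :
    (p ++ q).insertIdx p.length a = p ++ a :: q := by
  induction p with
  | nil => simp
  | cons x p ih => simp [ih]

lemma isMove_filter [DecidableEq α] {l l' : List α} (h : IsMove l l') :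
    ∃ a, l.filter (fun x => decide (x ≠ a)) = l'.filter (fun x => decide (x ≠ a)) := by
  obtain ⟨i, j, rfl⟩ := h
  refine ⟨l.get i, ?_⟩
  have hi := i.isLt
  have hj : (j : ℕ) ≤ (l.eraseIdx i).length := by
    rw [List.length_eraseIdx_of_lt hi]; omega
  have h1 : (l.eraseIdx i).filter (fun x => decide (x ≠ l.get i))
      = l.filter (fun x => decide (x ≠ l.get i)) := by
    have hl : l = l.take i ++ l.get i :: l.drop (i + 1) := by
      conv_lhs => rw [← List.take_append_drop i l, List.drop_eq_getElem_cons hi]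
      rfl
    rw [List.eraseIdx_eq_take_drop_succ]
    generalize l.get i = a at *
    conv_rhs => rw [hl]
    simp
  rw [← h1]
  generalize l.eraseIdx i = m at *
  generalize l.get i = a at *
  have hins := insertIdx_mid (m.take j) (m.drop j) a
  rw [List.take_append_drop, List.length_take, min_eq_left hj] at hins
  rw [hins]
  conv_lhs => rw [← List.take_append_drop j m]
  rw [List.filter_append, List.filter_append]
  simp

lemma reachIn_filter [DecidableEq α] (m : ℕ) : ∀ {l l' : List α}, ReachIn IsMove m l l' →
    ∃ S : Finset α, S.card ≤ m ∧
      l.filter (fun x => decide (x ∉ S)) = l'.filter (fun x => decide (x ∉ S)) := by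
  induction m with
  | zero => intro l l' h; cases h; exact ⟨∅, by simp, rfl⟩
  | succ m ih =>
    rintro l l' ⟨k, hk, h⟩
    obtain ⟨S, hS, h1⟩ := ih h
    obtain ⟨a, ha⟩ := isMove_filter hk
    refine ⟨insert a S, (Finset.card_insert_le _ _).trans (by omega), ?_⟩
    have e1 : ∀ t : List α, t.filter (fun x => decide (x ∉ insert a S))
        = (t.filter (fun x => decide (x ∉ S))).filter (fun x => decide (x ≠ a)) := by
      intro t; rw [List.filter_filter]; apply List.filter_congr; intro x _; simp
    have e2 : ∀ t : List α, t.filter (fun x => decide (x ∉ insert a S))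
        = (t.filter (fun x => decide (x ≠ a))).filter (fun x => decide (x ∉ S)) := by
      intro t; rw [List.filter_filter]; apply List.filter_congr; intro x _; simp [Bool.and_comm]
    rw [e2, ha, ← e2, e1, h1, ← e1]

lemma isMove_of_append_s13 {p q u v : List α} {a : α} (h : u ++ v = p ++ q) :
    IsMove (u ++ a :: v) (p ++ a :: q) := by
  have hl := congrArg List.length h
  simp only [List.length_append] at hl
  refine ⟨⟨u.length, by simp⟩, ⟨p.length, by simp; omega⟩, ?_⟩
  have : (u ++ a :: v).eraseIdx u.length = p ++ q := by
    rw [List.eraseIdx_append_of_length_le le_rfl]; simpa using h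
  simp only [this]
  rw [insertIdx_mid]
  simp

lemma filter_reachIn [DecidableEq α] (S : Finset α) : ∀ {l l' : List α},
    l.Nodup → l'.Nodup → (∀ a, a ∈ l) → (∀ a, a ∈ l') →
    l.filter (fun x => decide (x ∉ S)) = l'.filter (fun x => decide (x ∉ S)) →
    ReachIn IsMove S.card l l' := by
  induction S using Finset.induction_on with
  | empty => intro l l' _ _ _ _ h; simpa [ReachIn] using h
  | insert a S ha ih =>
    intro l l' hl hl' ml ml' h
    rw [Finset.card_insert_of_notMem ha]
    obtain ⟨s, t, rfl⟩ := List.append_of_mem (ml a)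
    obtain ⟨u, v, rfl⟩ := List.append_of_mem (ml' a)
    have key : ∀ s t : List α, (s ++ a :: t).Nodup →
        (s ++ a :: t).filter (fun x => decide (x ∉ insert a S))
          = (s ++ t).filter (fun x => decide (x ∉ S)) := by
      intro s t hn
      have hn' := (List.nodup_middle.1 hn)
      rw [List.nodup_cons] at hn'
      have : (s ++ a :: t).filter (fun x => decide (x ∉ insert a S))
          = (s ++ t).filter (fun x => decide (x ∉ insert a S)) := by
        simp [List.filter_append, List.filter_cons]
      rw [this]
      apply List.filter_congr
      intro x hx
      have : x ≠ a := fun h => hn'.1 (h ▸ hx)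
      simp [this]
    rw [key _ _ hl, key _ _ hl', List.filter_append u v, List.filter_eq_append_iff] at h
    obtain ⟨p, q, hpq, hp, hq⟩ := h
    refine ⟨p ++ a :: q, isMove_of_append_s13 hpq, ?_⟩
    have perm : (s ++ a :: t).Perm (p ++ a :: q) :=
      (List.perm_middle.trans (by rw [hpq])).trans List.perm_middle.symm
    refine ih (perm.nodup_iff.1 hl) hl' (fun b => perm.mem_iff.1 (ml b)) ml' ?_
    rw [List.filter_append, List.filter_append, List.filter_cons, List.filter_cons, hp, hq]

lemma eq_of_filter [DecidableEq α] (S : Finset α) : ∀ {l l' : List α},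
    List.Forall₂ (fun x y => x ∈ S ∨ y ∈ S → x = y) l l' →
    l.filter (fun x => decide (x ∉ S)) = l'.filter (fun x => decide (x ∉ S)) → l = l' := by
  intro l l' h
  induction h with
  | nil => simp
  | @cons x y l l' hxy _ ih =>
    intro hf
    by_cases hx : x ∈ S
    · have := hxy (Or.inl hx); subst this
      simp [List.filter_cons, hx] at hf
      rw [ih (by simpa using hf)]
    · by_cases hy : y ∈ S
      · exact absurd (hxy (Or.inr hy) ▸ hy) hx
      · simp [List.filter_cons, hx, hy] at hf
        rw [ih (by simpa using hf.2), hf.1]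

end Aux

section Perm
variable {n : ℕ}

/-- The one-line word restricted to the letters outside `S`. -/
def restr (S : Finset (Fin n)) (σ : Equiv.Perm (Fin n)) : List (Fin n) :=
  (oneLine σ).filter (fun x => decide (x ∉ S))

lemma oneLine_nodup (σ : Equiv.Perm (Fin n)) : (oneLine σ).Nodup :=
  List.nodup_ofFn.2 σ.injective

lemma mem_oneLine (σ : Equiv.Perm (Fin n)) (a : Fin n) : a ∈ oneLine σ := by
  unfold oneLine; rw [List.mem_ofFn]; exact σ.surjective a

lemma reachIn_of_restr {S : Finset (Fin n)} {σ π : Equiv.Perm (Fin n)}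
    (h : restr S σ = restr S π) : ReachIn IsMove S.card (oneLine σ) (oneLine π) :=
  filter_reachIn S (oneLine_nodup σ) (oneLine_nodup π) (mem_oneLine σ) (mem_oneLine π) h

lemma dist_le_of_restr {S : Finset (Fin n)} {σ π : Equiv.Perm (Fin n)}
    (h : restr S σ = restr S π) : translocDist σ π ≤ S.card :=
  Nat.sInf_le (reachIn_of_restr h)

lemma exists_restr (σ π : Equiv.Perm (Fin n)) :
    ∃ S : Finset (Fin n), S.card ≤ translocDist σ π ∧ restr S σ = restr S π := by
  have hne : {m | ReachIn IsMove m (oneLine σ) (oneLine π)}.Nonempty :=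
    ⟨_, reachIn_of_restr (S := Finset.univ) (by simp [restr])⟩
  exact reachIn_filter _ (Nat.sInf_mem hne)

lemma card_fiber (S : Finset (Fin n)) (σ : Equiv.Perm (Fin n)) :
    (Finset.univ.filter (fun π : Equiv.Perm (Fin n) => restr S σ = restr S π)).card
      ≤ n ^ S.card := by
  have : (Finset.univ : Finset (S → Fin n)).card = n ^ S.card := by simp
  rw [← this]
  refine Finset.card_le_card_of_injOn (fun π (a : S) => π.symm a) (by simp) ?_
  intro π hπ ρ hρ h
  simp only [Finset.coe_filter, Finset.mem_univ, true_and, Set.mem_ofPred_eq] at hπ hρ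
  have hl : oneLine π = oneLine ρ := by
    refine eq_of_filter S ?_ (hπ.symm.trans hρ)
    unfold oneLine
    rw [List.forall₂_iff_get]
    refine ⟨by simp, ?_⟩
    intro i h1 h2
    simp only [List.get_ofFn]
    simp only [List.length_ofFn] at h1
    have key : ∀ a ∈ S, π.symm a = ρ.symm a := fun a ha => congrFun h ⟨a, ha⟩
    rintro (hx | hx)
    · have := key _ hx
      have h3 := congrArg ρ this
      simpa using h3.symm
    · have := key _ hx
      have h3 := congrArg π this
      simpa using h3.symm
  unfold oneLine at hl
  exact Equiv.coe_fn_injective (List.ofFn_injective hl)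

lemma card_ball (hn : 1 ≤ n) (r : ℕ) (σ : Equiv.Perm (Fin n)) :
    (Finset.univ.filter (fun π : Equiv.Perm (Fin n) =>
      ∃ S : Finset (Fin n), S.card ≤ r ∧ restr S σ = restr S π)).card ≤ 2 ^ n * n ^ r := by
  have hsub : (Finset.univ.filter (fun π : Equiv.Perm (Fin n) =>
      ∃ S : Finset (Fin n), S.card ≤ r ∧ restr S σ = restr S π)) ⊆
      (Finset.univ.filter (fun S : Finset (Fin n) => S.card ≤ r)).biUnion
        (fun S => Finset.univ.filter (fun π : Equiv.Perm (Fin n) => restr S σ = restr S π)) := by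
    intro π hπ
    simpa using hπ
  refine (Finset.card_le_card hsub).trans ?_
  refine (Finset.card_biUnion_le_card_mul _ _ (n ^ r) ?_).trans ?_
  · intro S hS
    exact (card_fiber S σ).trans (Nat.pow_le_pow_right hn (by simpa using hS))
  · refine Nat.mul_le_mul_right _ ?_
    refine (Finset.card_filter_le _ _).trans ?_
    simp

lemma code_card_le {d : ℕ} (hd : 1 ≤ d) (hdn : d ≤ n) (C : Finset (Equiv.Perm (Fin n)))
    (hC : ∀ σ ∈ C, ∀ π ∈ C, σ ≠ π → d ≤ translocDist σ π) :
    C.card ≤ (n - d + 1).factorial := by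
  obtain ⟨S, hS⟩ : ∃ S : Finset (Fin n), S.card = d - 1 := by
    obtain ⟨S, -, hS⟩ := Finset.exists_subset_card_eq
      (s := (Finset.univ : Finset (Fin n))) (n := d - 1) (by simp; omega)
    exact ⟨S, hS⟩
  have hlen : (restr S (1 : Equiv.Perm (Fin n))).length = n - d + 1 := by
    have hnd : (restr S (1 : Equiv.Perm (Fin n))).Nodup := (oneLine_nodup 1).filter _
    rw [← List.toFinset_card_of_nodup hnd]
    have : (restr S (1 : Equiv.Perm (Fin n))).toFinset = Sᶜ := by
      ext x; simp [restr, mem_oneLine]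
    rw [this, Finset.card_compl, hS]; simp; omega
  have h1 : C.card ≤ (restr S (1 : Equiv.Perm (Fin n))).permutations.toFinset.card := by
    refine Finset.card_le_card_of_injOn (restr S) ?_ ?_
    · intro σ _
      simp only [List.coe_toFinset, Set.mem_ofPred_eq, List.mem_permutations]
      refine List.Perm.filter _ ?_
      rw [List.perm_ext_iff_of_nodup (oneLine_nodup _) (oneLine_nodup _)]
      simp [mem_oneLine]
    · intro σ hσ π hπ h
      by_contra hne
      have := hC σ hσ π hπ hne
      have := dist_le_of_restr h
      omega
  refine h1.trans ((List.toFinset_card_le _).trans ?_)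
  rw [List.length_permutations, hlen]

lemma codes_bdd (n d : ℕ) : BddAbove {M | ∃ C : Finset (Equiv.Perm (Fin n)), C.card = M ∧
    ∀ σ ∈ C, ∀ π ∈ C, σ ≠ π → d ≤ translocDist σ π} :=
  ⟨Fintype.card (Equiv.Perm (Fin n)), by rintro _ ⟨C, rfl, -⟩; exact Finset.card_le_univ C⟩

lemma codes_mem (n d : ℕ) : ∃ C : Finset (Equiv.Perm (Fin n)), C.card = maxTranslocCode n d ∧
    ∀ σ ∈ C, ∀ π ∈ C, σ ≠ π → d ≤ translocDist σ π :=
  Nat.sSup_mem (s := {M | ∃ C : Finset (Equiv.Perm (Fin n)), C.card = M ∧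
    ∀ σ ∈ C, ∀ π ∈ C, σ ≠ π → d ≤ translocDist σ π}) ⟨0, ∅, by simp⟩ (codes_bdd n d)

lemma maxCode_le {d : ℕ} (hd : 1 ≤ d) (hdn : d ≤ n) :
    maxTranslocCode n d ≤ (n - d + 1).factorial := by
  obtain ⟨C, h, hC⟩ := codes_mem n d
  rw [← h]; exact code_card_le hd hdn C hC

lemma le_maxCode {d : ℕ} (hd : 1 ≤ d) (hdn : d ≤ n) :
    n.factorial ≤ maxTranslocCode n d * (2 ^ n * n ^ (d - 1)) := by
  obtain ⟨C, h, hC⟩ := codes_mem n d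
  have hcov : (Finset.univ : Finset (Equiv.Perm (Fin n))) ⊆ C.biUnion (fun σ =>
      Finset.univ.filter (fun π : Equiv.Perm (Fin n) =>
        ∃ S : Finset (Fin n), S.card ≤ d - 1 ∧ restr S σ = restr S π)) := by
    intro π _
    by_contra hcon
    simp only [Finset.mem_biUnion, Finset.mem_filter, Finset.mem_univ, true_and, not_exists,
      not_and] at hcon
    have hπ : π ∉ C := fun hm => hcon π hm ∅ (by simp) rfl
    have hle : (insert π C).card ≤ maxTranslocCode n d := by
      refine le_csSup (codes_bdd n d) ⟨insert π C, rfl, ?_⟩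
      intro σ hσ ρ hρ hne
      rw [Finset.mem_insert] at hσ hρ
      by_contra hlt
      push Not at hlt
      obtain ⟨S, hS, hr⟩ := exists_restr σ ρ
      rcases hσ with rfl | hσ <;> rcases hρ with rfl | hρ
      · exact hne rfl
      · exact hcon ρ hρ S (by omega) hr.symm
      · exact hcon σ hσ S (by omega) hr
      · exact absurd (hC σ hσ ρ hρ hne) (by omega)
    rw [Finset.card_insert_of_notMem hπ] at hle
    omega
  have h2 := (Finset.card_le_card hcov).trans
    (Finset.card_biUnion_le_card_mul _ _ _ (fun σ _ => card_ball (by omega) (d - 1) σ))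
  rw [h] at h2
  simpa [Fintype.card_perm] using h2

end Perm

lemma log_factorial_bounds {n : ℕ} (hn : 1 ≤ n) :
    n * Real.log n - n ≤ Real.log n.factorial ∧ Real.log n.factorial ≤ n * Real.log n := by
  have hn0 : (0 : ℝ) < n := by exact_mod_cast hn
  have hf : (0 : ℝ) < n.factorial := by exact_mod_cast n.factorial_pos
  constructor
  · have h := Real.pow_div_factorial_le_exp (n : ℝ) hn0.le n
    have h2 := Real.log_le_log (by positivity) h
    rw [Real.log_exp, Real.log_div (by positivity) hf.ne', Real.log_pow] at h2
    linarith
  · rw [← Real.log_pow]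
    exact Real.log_le_log hf (by exact_mod_cast n.factorial_le_pow)

open Filter in
lemma tendsto_log_nat : Tendsto (fun n : ℕ => Real.log n) atTop atTop :=
  Real.tendsto_log_atTop.comp tendsto_natCast_atTop_atTop

open Filter in
lemma tendsto_fact_ratio :
    Tendsto (fun n : ℕ => (n * Real.log n) / Real.log n.factorial) atTop (nhds 1) := by
  have h : Tendsto (fun n : ℕ => Real.log n.factorial / (n * Real.log n)) atTop (nhds 1) := by
    have hlow : Tendsto (fun n : ℕ => 1 - (Real.log n)⁻¹) atTop (nhds 1) := by
      simpa using (tendsto_inv_atTop_zero.comp tendsto_log_nat).const_sub 1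
    refine tendsto_of_tendsto_of_tendsto_of_le_of_le' hlow tendsto_const_nhds ?_ ?_
    all_goals
      filter_upwards [eventually_ge_atTop 2] with n hn
      have hn0 : (0 : ℝ) < n := by positivity
      have hl : 0 < Real.log n := Real.log_pos (by exact_mod_cast hn)
      have hb := log_factorial_bounds (n := n) (by omega)
    · rw [le_div_iff₀ (by positivity)]
      have : (1 - (Real.log n)⁻¹) * (n * Real.log n) = n * Real.log n - n := by field_simp
      linarith [hb.1]
    · rw [div_le_one (by positivity)]; exact hb.2
  have := h.inv₀ one_ne_zero
  simpa using this

open Filter in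
/-- Capacity of the translocation channel: if `d(n)/n → δ ∈ [0,1]` with
`1 ≤ d(n) ≤ n`, then `ln A∘(n,d(n)) / ln(n!) → 1 − δ`. -/
theorem translocCode_capacity (δ : ℝ) (hδ : δ ∈ Set.Icc (0 : ℝ) 1) (d : ℕ → ℕ)
    (hd : ∀ n, 1 ≤ n → 1 ≤ d n ∧ d n ≤ n)
    (hlim : Tendsto (fun n => (d n : ℝ) / (n : ℝ)) atTop (nhds δ)) :
    Tendsto (fun n => Real.log (maxTranslocCode n (d n)) / Real.log (n.factorial))
      atTop (nhds (1 - δ)) := by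
  have hR := tendsto_fact_ratio
  have hinv : Tendsto (fun n : ℕ => (Real.log n)⁻¹) atTop (nhds 0) :=
    tendsto_inv_atTop_zero.comp tendsto_log_nat
  have hn1 : Tendsto (fun n : ℕ => ((n : ℝ))⁻¹) atTop (nhds 0) :=
    tendsto_inv_atTop_zero.comp tendsto_natCast_atTop_atTop
  have hup : Tendsto (fun n : ℕ => (1 - (d n : ℝ) / n + (n : ℝ)⁻¹) *
      ((n * Real.log n) / Real.log n.factorial)) atTop (nhds (1 - δ)) := by
    simpa using ((hlim.const_sub 1).add hn1).mul hR
  have hlow : Tendsto (fun n : ℕ => 1 - (Real.log 2 * (Real.log n)⁻¹ + (d n : ℝ) / n) *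
      ((n * Real.log n) / Real.log n.factorial)) atTop (nhds (1 - δ)) := by
    simpa using ((((hinv.const_mul (Real.log 2)).add hlim).mul hR).const_sub 1)
  refine tendsto_of_tendsto_of_tendsto_of_le_of_le' hlow hup ?_ ?_
  all_goals
    filter_upwards [eventually_ge_atTop 2] with n hn
    obtain ⟨hd1, hdn⟩ := hd n (by omega)
    have hn0 : (0 : ℝ) < n := by positivity
    have hl : 0 < Real.log n := Real.log_pos (by exact_mod_cast hn)
    have hF : 0 < Real.log n.factorial := Real.log_pos (by
      exact_mod_cast lt_of_lt_of_le (by omega) (Nat.self_le_factorial n))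
    have hlo := le_maxCode hd1 hdn
    have hhi := maxCode_le hd1 hdn
    have hApos : 0 < maxTranslocCode n (d n) := by
      rcases Nat.eq_zero_or_pos (maxTranslocCode n (d n)) with h | h
      · rw [h, zero_mul] at hlo
        exact absurd hlo (by have := n.factorial_pos; omega)
      · exact h
    have hA0 : (0 : ℝ) < maxTranslocCode n (d n) := by exact_mod_cast hApos
  · have hlo' : (n.factorial : ℝ) ≤ maxTranslocCode n (d n) * (2 ^ n * n ^ (d n - 1)) := by
      exact_mod_cast hlo
    have h2 := Real.log_le_log (by exact_mod_cast n.factorial_pos) hlo'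
    rw [Real.log_mul hA0.ne' (by positivity), Real.log_mul (by positivity) (by positivity),
      Real.log_pow, Real.log_pow] at h2
    have h3 : ((d n - 1 : ℕ) : ℝ) * Real.log n ≤ d n * Real.log n := by
      refine mul_le_mul_of_nonneg_right ?_ hl.le
      exact_mod_cast Nat.sub_le _ _
    rw [le_div_iff₀ hF]
    have e : (1 - (Real.log 2 * (Real.log n)⁻¹ + (d n : ℝ) / n) *
      ((n * Real.log n) / Real.log n.factorial)) * Real.log n.factorial
        = Real.log n.factorial - (n * Real.log 2 + d n * Real.log n) := by
      field_simp
    rw [e]; linarith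
  · have h2 : Real.log (maxTranslocCode n (d n)) ≤ Real.log ((n - d n + 1).factorial) :=
      Real.log_le_log hA0 (by exact_mod_cast hhi)
    have h3 := (log_factorial_bounds (n := n - d n + 1) (by omega)).2
    have h4 : Real.log ((n - d n + 1 : ℕ) : ℝ) ≤ Real.log n :=
      Real.log_le_log (by positivity) (by exact_mod_cast (by omega))
    have h5 : ((n - d n + 1 : ℕ) : ℝ) = n - d n + 1 := by
      push_cast [Nat.cast_sub hdn]; ring
    have h6 := mul_le_mul_of_nonneg_left h4 (Nat.cast_nonneg (α := ℝ) (n - d n + 1))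
    rw [div_le_iff₀ hF]
    have e : (1 - (d n : ℝ) / n + (n : ℝ)⁻¹) *
      ((n * Real.log n) / Real.log n.factorial) * Real.log n.factorial
        = (n - d n + 1) * Real.log n := by
      field_simp
    rw [e, ← h5]; linarith
end

section
/- For all integers n and d with n ≥ d ≥ 2, the maximum size A_H(n,d) of a subset of S_n whose distinct elements are at pairwise Hamming distance at least d satisfies (n−d+1)!/(d−1) ≤ A_H(n,d) ≤ n!/(d−1)!. -/
/-- `maxHammingCode n d` is the maximum size of a subset of the symmetric group on `n`
elements whose distinct elements are at pairwise Hamming distance at least `d`. -/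
noncomputable def maxHammingCode (n d : ℕ) : ℕ :=
  sSup {M | ∃ C : Finset (Equiv.Perm (Fin n)), C.card = M ∧
    ∀ σ ∈ C, ∀ π ∈ C, σ ≠ π → d ≤ permHammingDist σ π}

/-- Perms agreeing with `π` off `S`: at most `|S|!` of them. -/
lemma card_agree_off {n : ℕ} (π : Equiv.Perm (Fin n)) (S : Finset (Fin n)) :
    (Finset.univ.filter fun σ : Equiv.Perm (Fin n) => ∀ i, i ∉ S → σ i = π i).card
      ≤ S.card.factorial := by
  classical
  have h1 : Fintype.card {f : Equiv.Perm (Fin n) // ∀ a, ¬ (a ∈ S) → f a = a}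
      = S.card.factorial := by
    rw [← Fintype.card_congr (Equiv.Perm.subtypeEquivSubtypePerm (fun a => a ∈ S)),
      Fintype.card_perm, Fintype.card_coe]
  rw [← h1, Fintype.card_subtype]
  refine Finset.card_le_card_of_injOn (fun σ => π⁻¹ * σ) ?_ ?_
  · intro σ hσ
    simp only [Finset.coe_filter, Finset.mem_univ, true_and, Set.mem_ofPred_eq] at hσ ⊢
    intro a ha
    simp [hσ a ha]
  · intro a _ b _ h
    exact mul_left_cancel h

/-- Bound on the size of the Hamming ball of radius `k`. -/
lemma card_ball_s14 {n k : ℕ} (hk : k ≤ n) (π : Equiv.Perm (Fin n)) :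
    (Finset.univ.filter fun σ : Equiv.Perm (Fin n) => permHammingDist σ π ≤ k).card
      ≤ n.choose k * k.factorial := by
  classical
  have hsub : (Finset.univ.filter fun σ : Equiv.Perm (Fin n) => permHammingDist σ π ≤ k) ⊆
      (Finset.powersetCard k (Finset.univ : Finset (Fin n))).biUnion
        (fun S => Finset.univ.filter fun σ : Equiv.Perm (Fin n) => ∀ i, i ∉ S → σ i = π i) := by
    intro σ hσ
    simp only [Finset.mem_filter, Finset.mem_univ, true_and] at hσ
    obtain ⟨S, hS, hc⟩ := Finset.exists_superset_card_eq hσ (by simpa using hk)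
    simp only [Finset.mem_biUnion, Finset.mem_powersetCard, Finset.mem_filter, Finset.mem_univ,
      true_and]
    refine ⟨S, ⟨Finset.subset_univ _, hc⟩, fun i hi => ?_⟩
    by_contra hne
    exact hi (hS (by simpa using hne))
  refine (Finset.card_le_card hsub).trans ?_
  refine (Finset.card_biUnion_le_card_mul _ _ k.factorial ?_).trans ?_
  · intro S hS
    rw [Finset.mem_powersetCard] at hS
    simpa [hS.2] using card_agree_off π S
  · simp [Finset.card_powersetCard]

/-- Singleton-type bound. -/
lemma card_code_le {n d : ℕ} (hd : 2 ≤ d) (hdn : d ≤ n) (C : Finset (Equiv.Perm (Fin n)))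
    (hC : ∀ σ ∈ C, ∀ π ∈ C, σ ≠ π → d ≤ permHammingDist σ π) :
    C.card ≤ n.descFactorial (n - d + 1) := by
  classical
  have hm : n - d + 1 ≤ n := by omega
  have h1 : Fintype.card (Fin (n - d + 1) ↪ Fin n) = n.descFactorial (n - d + 1) := by
    simp [Fintype.card_embedding_eq]
  rw [← h1, ← Finset.card_univ]
  refine Finset.card_le_card_of_injOn
    (fun σ => (Fin.castLEEmb hm).trans σ.toEmbedding) (by simp) ?_
  intro σ hσ π hπ h
  by_contra hne
  have h2 := hC σ hσ π hπ hne
  have h3 : ∀ j : Fin (n - d + 1), σ (Fin.castLE hm j) = π (Fin.castLE hm j) := fun j => by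
    simpa using DFunLike.congr_fun h j
  have h4 : (Finset.univ.filter fun i => σ i ≠ π i) ⊆
      (Finset.univ.map (Fin.castLEEmb hm))ᶜ := by
    intro i hi
    simp only [Finset.mem_filter, Finset.mem_univ, true_and] at hi
    simp only [Finset.mem_compl, Finset.mem_map, Finset.mem_univ, true_and, not_exists]
    rintro j rfl
    exact hi (h3 j)
  have h5 := Finset.card_le_card h4
  rw [Finset.card_compl, Finset.card_map, Finset.card_univ, Fintype.card_fin,
    Fintype.card_fin] at h5
  unfold permHammingDist at h2
  omega

/-- For all `n ≥ d ≥ 2`, `(n−d+1)!/(d−1) ≤ A_H(n,d) ≤ n!/(d−1)!`. -/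
theorem maxHammingCode_bounds (n d : ℕ) (hd : 2 ≤ d) (hdn : d ≤ n) :
    ((n - d + 1).factorial : ℝ) / ((d : ℝ) - 1) ≤ (maxHammingCode n d : ℝ) ∧
    (maxHammingCode n d : ℝ) ≤ (n.factorial : ℝ) / ((d - 1).factorial : ℝ) := by
  classical
  have hbdd : BddAbove {M | ∃ C : Finset (Equiv.Perm (Fin n)), C.card = M ∧
    ∀ σ ∈ C, ∀ π ∈ C, σ ≠ π → d ≤ permHammingDist σ π} := by
    refine ⟨n.descFactorial (n - d + 1), ?_⟩
    rintro M ⟨C, rfl, hC⟩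
    exact card_code_le hd hdn C hC
  obtain ⟨C, hcard, hC⟩ := Nat.sSup_mem (⟨0, ∅, by simp⟩ : Set.Nonempty {M | ∃ C :
    Finset (Equiv.Perm (Fin n)), C.card = M ∧
    ∀ σ ∈ C, ∀ π ∈ C, σ ≠ π → d ≤ permHammingDist σ π}) hbdd
  change C.card = maxHammingCode n d at hcard
  have hsymm : ∀ σ π : Equiv.Perm (Fin n), permHammingDist σ π = permHammingDist π σ := by
    intro σ π
    simp only [permHammingDist, ne_comm]
  constructor
  · have hcover : (Finset.univ : Finset (Equiv.Perm (Fin n))) ⊆ C.biUnion (fun π =>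
        Finset.univ.filter fun σ : Equiv.Perm (Fin n) => permHammingDist σ π ≤ d - 1) := by
      intro σ _
      by_contra hno
      simp only [Finset.mem_biUnion, Finset.mem_filter, Finset.mem_univ, true_and, not_exists,
        not_and, not_le] at hno
      have hnotin : σ ∉ C := by
        intro hσ
        have := hno σ hσ
        simp [permHammingDist] at this
      have hle : (insert σ C).card ≤ maxHammingCode n d := by
        refine le_csSup hbdd ⟨insert σ C, rfl, ?_⟩
        intro a ha b hb hab
        rw [Finset.mem_insert] at ha hb
        rcases ha with rfl | ha <;> rcases hb with rfl | hb
        · exact absurd rfl hab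
        · have := hno b hb
          omega
        · have := hno a ha
          rw [hsymm]
          omega
        · exact hC a ha b hb hab
      rw [Finset.card_insert_of_notMem hnotin] at hle
      omega
    have h1 := Finset.card_le_card hcover
    have h2 := Finset.card_biUnion_le_card_mul C (fun π =>
        Finset.univ.filter fun σ : Equiv.Perm (Fin n) => permHammingDist σ π ≤ d - 1)
        (n.choose (d - 1) * (d - 1).factorial)
        (fun π _ => card_ball_s14 (by omega) π)
    rw [Finset.card_univ, Fintype.card_perm, Fintype.card_fin] at h1
    have h3 := h1.trans h2
    have h4 := Nat.choose_mul_factorial_mul_factorial (show d - 1 ≤ n by omega)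
    rw [← h4, mul_comm] at h3
    have hpos : 0 < n.choose (d - 1) * (d - 1).factorial :=
      Nat.mul_pos (Nat.choose_pos (by omega)) (Nat.factorial_pos _)
    have h5 := Nat.le_of_mul_le_mul_right h3 hpos
    rw [show n - (d - 1) = n - d + 1 by omega, hcard] at h5
    have hd' : (2 : ℝ) ≤ d := by exact_mod_cast hd
    have h6 : ((n - d + 1).factorial : ℝ) ≤ maxHammingCode n d := by exact_mod_cast h5
    exact (div_le_self (by positivity) (by linarith)).trans h6
  · have h1 := card_code_le hd hdn C hC
    rw [hcard] at h1
    have h2 := Nat.factorial_mul_descFactorial (show n - d + 1 ≤ n by omega)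
    rw [show n - (n - d + 1) = d - 1 by omega] at h2
    rw [le_div_iff₀ (by positivity), ← h2]
    have h3 := Nat.mul_le_mul_left (d - 1).factorial h1
    rw [mul_comm]
    exact_mod_cast h3
end

section
/- Let n ≥ 2 and let σ, π ∈ S_n be permutations with translocation distance d∘(σ,π) = 1. Then there are at most three indices i ∈ {1,…,n−1} for which there exists j ∈ {1,…,n−1} with σ(i) = π(j) and σ(i+1) ≠ π(j+1). -/
theorem move_entry {n : ℕ} (σ π : Equiv.Perm (Fin n)) (h : IsMove (oneLine σ) (oneLine π)) :
    ∃ a b : ℕ, ∀ k (hk : k < n), ∃ m, ∃ hm : m < n, π ⟨k, hk⟩ = σ ⟨m, hm⟩ ∧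
      m = if k < b then (if k < a then k else k + 1) else if k = b then a
        else if k - 1 < a then k - 1 else k := by
  obtain ⟨⟨a, ha⟩, ⟨b, hb⟩, h⟩ := h
  refine ⟨a, b, fun k hk => ?_⟩
  have e := congrArg (fun l => l[k]?) h
  simp only [oneLine, List.length_ofFn] at e ha hb
  simp only [List.getElem?_insertIdx, List.getElem?_eraseIdx, List.getElem?_ofFn,
    List.get_eq_getElem, List.getElem_ofFn, List.length_eraseIdx, List.length_ofFn] at e
  refine ⟨_, ?_, ?_, rfl⟩
  · grind
  · grind

theorem breakpoints_of_single_transloc (n : ℕ) (hn : 2 ≤ n) (σ π : Equiv.Perm (Fin n))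
    (h : translocDist σ π = 1) :
    {i : Fin n | ∃ (hi : (i : ℕ) + 1 < n) (j : Fin n) (hj : (j : ℕ) + 1 < n),
      σ i = π j ∧ σ ⟨(i : ℕ) + 1, hi⟩ ≠ π ⟨(j : ℕ) + 1, hj⟩}.ncard ≤ 3 := by
  have h1 : ReachIn IsMove 1 (oneLine σ) (oneLine π) := by
    have := Nat.sInf_mem (Nat.nonempty_of_sInf_eq_succ (show sInf {m | ReachIn IsMove m (oneLine σ) (oneLine π)} = 0 + 1 from h))
    unfold translocDist at h
    rw [h] at this
    exact this
  obtain ⟨l, hl, rfl⟩ := h1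
  obtain ⟨a, b, H⟩ := move_entry σ π hl
  rw [← Set.ncard_image_of_injective _ Fin.val_injective]
  refine (Set.ncard_le_ncard (t := (({a - 1, a, if b ≤ a then b - 1 else b} : Finset ℕ) : Set ℕ)) ?_
    (Finset.finite_toSet _)).trans ?_
  · rintro _ ⟨⟨i, hi'⟩, ⟨hi, ⟨j, hj'⟩, hj, e, ne⟩, rfl⟩
    obtain ⟨m, hm, e1, hm'⟩ := H j hj'
    obtain ⟨m2, hm2, e2, hm2'⟩ := H (j + 1) hj
    rw [e1] at e
    have e3 := congrArg Fin.val (σ.injective e)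
    simp only at e3
    simp only at ne
    rw [e2] at ne
    have e4 : i + 1 ≠ m2 := by
      rintro rfl
      exact ne rfl
    simp only [Finset.coe_insert, Finset.coe_singleton, Set.mem_insert_iff, Set.mem_singleton_iff]
    clear ne e e1 e2 H
    split_ifs at * <;> omega
  · rw [Set.ncard_coe_finset]
    exact Finset.card_le_three
end
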